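/- Let I be the basic PLP-polymatroidal ideal of type (0, b | α, β) in S = K[x₁,…,x_n]. Then for every integer k ≥ n − 1 one has (I^{k+1} : 𝔪) = I^{k+1} + I·(I^k : 𝔪). (This expresses that the socle module Soc*(I) = ⊕_{m≥1} soc(Iᵐ) is generated over the Rees ring in degrees < n, and likewise Soc(I) is generated in degrees < n.) -/

import Mathlib

open MvPolynomial

/-!
A vector `x` with steps `l ≤ x ≤ h` whose partial sums lie between `L` and `U` is a lattice path in
a strip, and such a path exists iff each pair of bounds taken at two positions is compatible: the
supremum of the lower bounds implied by the individual `L i` is then the least one. Since all the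
conditions are differences of integers, approximate solvability with an error less than `1` already
gives an integer solution.

The exponents of the generators of `I ^ k` are the paths for the `k`-fold bounds, and the vectors
`x` such that all `x + e_t` are of this kind are the paths for slightly shrunken `k`-fold bounds.
If `x` is a path for the `(k + 1)`-fold bounds, then `x / (k + 1)` is a rational solution of the
problem of splitting off an exponent of `I` from `x`. In the shrunken case it solves the problem up
to an error of at most `max (n - 1) 1 / (k + 1)`, which is less than `1` if `k ≥ max (n - 1) 1`.

Finally, let `v` be the exponent of a monomial in `(I ^ (k + 1) : 𝔪)` but not in `I ^ (k + 1)`. By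
the existence criterion, applied to the paths below `v`, the degree of `v` is smaller than that of
every generator of `I ^ (k + 1)`. A generator dividing the product of this monomial with a variable
is therefore equal to the product, so `v` is one of the exponents `x` considered above.
-/

section PartialSum

variable {G : Type*} {n : ℕ}

lemma partialSum_eq_sum_filter [AddCommMonoid G] (x : Fin n → G) (i : Fin (n + 1)) :
    Fin.partialSum x i = ∑ j with j.castSucc < i, x j := by
  induction i using Fin.induction with
  | zero => simp
  | succ t ih =>
    have hfilter : ({j | j.castSucc < t.succ} : Finset (Fin n)) =
        insert t ({j | j.castSucc < t.castSucc} : Finset (Fin n)) := by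
      ext j
      simp [Fin.castSucc_lt_succ_iff, le_iff_eq_or_lt]
    rw [Fin.partialSum_succ, ih, hfilter, Finset.sum_insert (by simp), add_comm]

lemma partialSum_succ_eq_sum_Iic [AddCommMonoid G] (x : Fin n → G) (i : Fin n) :
    Fin.partialSum x i.succ = ∑ j ∈ Finset.Iic i, x j := by
  rw [partialSum_eq_sum_filter]
  congr 1
  ext j
  simp [Fin.castSucc_lt_succ_iff]

lemma partialSum_zero_left [AddCommMonoid G] : Fin.partialSum (0 : Fin n → G) = 0 := by
  ext i
  simp [partialSum_eq_sum_filter]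

lemma partialSum_add [AddCommMonoid G] (x y : Fin n → G) :
    Fin.partialSum (x + y) = Fin.partialSum x + Fin.partialSum y := by
  ext i
  simp [partialSum_eq_sum_filter, Finset.sum_add_distrib]

lemma partialSum_sub [AddCommGroup G] (x y : Fin n → G) :
    Fin.partialSum (x - y) = Fin.partialSum x - Fin.partialSum y := by
  ext i
  simp [partialSum_eq_sum_filter, Finset.sum_sub_distrib]

lemma partialSum_nsmul [AddCommMonoid G] (k : ℕ) (x : Fin n → G) :
    Fin.partialSum (k • x) = k • Fin.partialSum x := by
  ext i
  simp [partialSum_eq_sum_filter, Finset.smul_sum]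

lemma partialSum_single [AddCommMonoid G] (t : Fin n) (a : G) (i : Fin (n + 1)) :
    Fin.partialSum (Pi.single t a) i = if t.castSucc < i then a else 0 := by
  simp [partialSum_eq_sum_filter]

lemma antitone_partialSum_single [AddCommMonoid G] [Preorder G] {a : G} (ha : 0 ≤ a) :
    Antitone fun t : Fin n ↦ Fin.partialSum (Pi.single t a) := by
  intro s t hst i
  simp only [partialSum_single]
  split_ifs with ht hs
  exacts [le_rfl, absurd ((Fin.castSucc_le_castSucc_iff.mpr hst).trans_lt ht) hs, ha, le_rfl]

lemma partialSum_last [AddCommMonoid G] (x : Fin n → G) :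
    Fin.partialSum x (Fin.last n) = ∑ j, x j := by
  simp [partialSum_eq_sum_filter, Fin.castSucc_lt_last]

lemma partialSum_one [AddCommMonoidWithOne G] (i : Fin (n + 1)) :
    Fin.partialSum (1 : Fin n → G) i = (i : ℕ) := by
  induction i using Fin.induction with
  | zero => simp
  | succ t ih => simp [Fin.partialSum_succ, ih]

lemma exists_partialSum_single_eq [AddCommMonoid G] (a : G) {i j : Fin (n + 1)} (hij : i ≤ j)
    (h : ¬ (i = 0 ∧ j = Fin.last n)) :
    ∃ t : Fin n, Fin.partialSum (Pi.single t a) j = Fin.partialSum (Pi.single t a) i := by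
  rcases Fin.eq_zero_or_eq_succ i with rfl | ⟨t, rfl⟩
  · obtain ⟨t, rfl⟩ := Fin.exists_castSucc_eq.mpr fun hj ↦ h ⟨rfl, hj⟩
    exact ⟨t, by simp [partialSum_single]⟩
  · have : t.castSucc < j := t.castSucc_lt_succ.trans_le hij
    exact ⟨t, by simp [partialSum_single, this]⟩

variable [AddCommGroup G]

/-- The best lower bound on the `j`-th partial sum of a vector with entries in `[l, h]` that follows
from the lower bound `L i` on the `i`-th one. The supremum over `i` is the least path in a strip. -/
def impliedLowerBound (l h : Fin n → G) (L : Fin (n + 1) → G) (i j : Fin (n + 1)) : G :=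
  L i + if i ≤ j then Fin.partialSum l j - Fin.partialSum l i
    else Fin.partialSum h j - Fin.partialSum h i

lemma impliedLowerBound_self (l h : Fin n → G) (L : Fin (n + 1) → G) (i : Fin (n + 1)) :
    impliedLowerBound l h L i i = L i := by
  simp [impliedLowerBound]

lemma impliedLowerBound_succ (l h : Fin n → G) (L : Fin (n + 1) → G) (i : Fin (n + 1))
    (t : Fin n) :
    impliedLowerBound l h L i t.succ =
      impliedLowerBound l h L i t.castSucc + if i ≤ t.castSucc then l t else h t := by
  rcases lt_trichotomy i t.succ with hi | rfl | hi
  · have hi' : i ≤ t.castSucc := Fin.le_castSucc_iff.mpr hi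
    simp only [impliedLowerBound, hi', hi.le, if_true, Fin.partialSum_succ]
    abel
  · simp [impliedLowerBound, Fin.partialSum_succ]
  · have hi' : ¬ i ≤ t.castSucc := (t.castSucc_lt_succ.trans hi).not_ge
    simp only [impliedLowerBound, hi', hi.not_ge, if_false, Fin.partialSum_succ]
    abel

variable [LinearOrder G] [IsOrderedAddMonoid G]

lemma eq_of_le_of_partialSum_last_le {x y : Fin n → G} (hxy : x ≤ y)
    (hlast : Fin.partialSum y (Fin.last n) ≤ Fin.partialSum x (Fin.last n)) : x = y := by
  rw [partialSum_last, partialSum_last] at hlast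
  have hsum : ∑ j, x j = ∑ j, y j := le_antisymm (Finset.sum_le_sum fun j _ ↦ hxy j) hlast
  exact funext fun j ↦
    (Finset.sum_eq_sum_iff_of_le fun j _ ↦ hxy j).mp hsum j (Finset.mem_univ j)

lemma monotone_partialSum {x : Fin n → G} (hx : 0 ≤ x) : Monotone (Fin.partialSum x) :=
  Fin.monotone_iff_le_succ.mpr fun t ↦ by
    rw [Fin.partialSum_succ]
    exact le_add_of_nonneg_right (hx t)

lemma partialSum_sub_le_partialSum_sub {x y : Fin n → G} (hxy : x ≤ y) {i j : Fin (n + 1)}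
    (hij : i ≤ j) :
    Fin.partialSum x j - Fin.partialSum x i ≤ Fin.partialSum y j - Fin.partialSum y i := by
  have := monotone_partialSum (sub_nonneg.mpr hxy) hij
  simp only [partialSum_sub, Pi.sub_apply] at this
  grind

/-- The vectors between `l` and `h` whose partial sums lie between `L` and `U`. The bounds on the
partial sums start with the one on the empty sum, so a box with `L 0 = U 0 = 0` is a set of lattice
paths in a strip starting at the origin. -/
def prefixBox (l h : Fin n → G) (L U : Fin (n + 1) → G) : Set (Fin n → G) :=
  {x | x ∈ Set.Icc l h ∧ Fin.partialSum x ∈ Set.Icc L U}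

theorem prefixBox_nonempty {l h : Fin n → G} {L U : Fin (n + 1) → G} (hlh : l ≤ h)
    (hL : L 0 = 0) (hU : U 0 = 0)
    (hLU : ∀ i j, i ≤ j → L i + (Fin.partialSum l j - Fin.partialSum l i) ≤ U j)
    (hUL : ∀ i j, i ≤ j → L j ≤ U i + (Fin.partialSum h j - Fin.partialSum h i)) :
    (prefixBox l h L U).Nonempty := by
  let c := impliedLowerBound l h L
  let σ : Fin (n + 1) → G := fun j ↦ Finset.univ.sup' Finset.univ_nonempty (c · j)
  have c_le_U (i j) : c i j ≤ U j := by
    by_cases hij : i ≤ j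
    · simpa [c, impliedLowerBound, hij] using hLU i j hij
    · have := hUL j i (le_of_not_ge hij)
      simp only [c, impliedLowerBound, hij, if_false]
      grind
  have c_le_σ (i j) : c i j ≤ σ j := Finset.le_sup' (c · j) (Finset.mem_univ i)
  have L_le_σ : L ≤ σ := fun j ↦ (impliedLowerBound_self l h L j).ge.trans (c_le_σ j j)
  have σ_le_U : σ ≤ U := fun j ↦ Finset.sup'_le _ _ fun i _ ↦ c_le_U i j
  have step_ge (t : Fin n) : σ t.castSucc + l t ≤ σ t.succ :=
    le_sub_iff_add_le.mp <| Finset.sup'_le _ _ fun i _ ↦ le_sub_iff_add_le.mpr <| by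
      refine le_trans ?_ (c_le_σ i t.succ)
      simp only [c, impliedLowerBound_succ]
      gcongr
      split_ifs
      exacts [le_rfl, hlh t]
  have step_le (t : Fin n) : σ t.succ ≤ σ t.castSucc + h t :=
    Finset.sup'_le _ _ fun i _ ↦ by
      simp only [c, impliedLowerBound_succ]
      gcongr
      · exact c_le_σ i _
      · split_ifs
        exacts [hlh t, le_rfl]
  have hσ0 : σ 0 = 0 := le_antisymm (hU ▸ σ_le_U 0) (hL ▸ L_le_σ 0)
  have hσ : Fin.partialSum (fun t : Fin n ↦ -σ t.castSucc + σ t.succ) = σ := by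
    simpa [hσ0] using Fin.partialSum_left_neg σ
  refine ⟨fun t ↦ -σ t.castSucc + σ t.succ, ⟨fun t ↦ ?_, fun t ↦ ?_⟩, ?_⟩
  · exact le_neg_add_iff_add_le.mpr (step_ge t)
  · exact neg_add_le_iff_le_add.mpr (step_le t)
  · rw [hσ]
    exact ⟨L_le_σ, σ_le_U⟩

end PartialSum

section Integer

variable {n : ℕ}

lemma int_le_of_mul_lt_mul_add {N a b : ℤ} (hN : 0 < N) (h : N * a < N * b + N) : a ≤ b :=
  Int.lt_add_one_iff.mp <| lt_of_mul_lt_mul_left (by linarith) hN.le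

-- The rational point `x / N` may violate the lower bounds by `δ / N` and `P / N`, but has room
-- `Q / N` below the upper bounds `U`.
theorem prefixBox_nonempty_of_approx {l h δ x : Fin n → ℤ} {L U P Q : Fin (n + 1) → ℤ} {N : ℕ}
    (hN : 0 < N) (hL : L 0 = 0) (hU : U 0 = 0)
    (hl : N • l ≤ x + δ) (hh : x ≤ N • h)
    (hLx : N • L ≤ Fin.partialSum x + P) (hUx : Fin.partialSum x + Q ≤ N • U)
    (hδ : ∀ t, δ t < N)
    (hPQ : ∀ i j, i ≤ j → P i + (Fin.partialSum δ j - Fin.partialSum δ i) < Q j + N)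
    (hQP : ∀ i j, i ≤ j → P j < Q i + N) :
    (prefixBox l h L U).Nonempty := by
  have hN' : (0 : ℤ) < N := mod_cast hN
  refine prefixBox_nonempty (fun t ↦ ?_) hL hU (fun i j hij ↦ ?_) (fun i j hij ↦ ?_) <;>
    refine int_le_of_mul_lt_mul_add hN' ?_
  · have hlt := hl t
    have hht := hh t
    simp only [Pi.add_apply, Pi.smul_apply] at hlt hht
    simp only [nsmul_eq_mul] at hlt hht
    linarith [hδ t]
  · have hLi := hLx i
    have hUj := hUx j
    have hsteps := partialSum_sub_le_partialSum_sub hl hij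
    simp only [partialSum_add, partialSum_nsmul, Pi.add_apply, Pi.smul_apply] at hLi hUj hsteps
    simp only [nsmul_eq_mul] at hLi hUj hsteps
    linarith [hPQ i j hij]
  · have hLj := hLx j
    have hUi := hUx i
    have hsteps := partialSum_sub_le_partialSum_sub hh hij
    simp only [partialSum_nsmul, Pi.add_apply, Pi.smul_apply] at hLj hUi hsteps
    simp only [nsmul_eq_mul] at hLj hUi hsteps
    linarith [hQP i j hij]

lemma exists_mem_prefixBox_sub_mem_prefixBox {l₁ h₁ l₂ h₂ x : Fin n → ℤ}
    {L₁ U₁ L₂ U₂ : Fin (n + 1) → ℤ}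
    (hne : (prefixBox (l₁ ⊔ (x - h₂)) (h₁ ⊓ (x - l₂))
      (L₁ ⊔ (Fin.partialSum x - U₂)) (U₁ ⊓ (Fin.partialSum x - L₂))).Nonempty) :
    ∃ y ∈ prefixBox l₁ h₁ L₁ U₁, x - y ∈ prefixBox l₂ h₂ L₂ U₂ := by
  obtain ⟨y, ⟨hl, hh⟩, hL, hU⟩ := hne
  rw [sup_le_iff] at hl hL
  rw [le_inf_iff] at hh hU
  refine ⟨y, ⟨⟨hl.1, hh.1⟩, hL.1, hU.1⟩, ⟨le_sub_comm.mp hh.2, sub_le_comm.mp hl.2⟩, ?_⟩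
  rw [partialSum_sub]
  exact ⟨le_sub_comm.mp hU.2, sub_le_comm.mp hL.2⟩

lemma succ_nsmul_sup_sub_le {ι : Type*} {a c m : ι → ℤ} {k : ℕ} (ha : (k + 1) • a ≤ m)
    (hc : m ≤ (k + 1) • c) : (k + 1) • (a ⊔ (m - k • c)) ≤ m := by
  intro i
  have hai := ha i
  have hci := hc i
  simp only [Pi.smul_apply, Pi.sup_apply, Pi.sub_apply] at hai hci ⊢
  simp only [nsmul_eq_mul] at hai hci ⊢
  rcases max_choice (a i) (m i - k * c i) with h | h <;> rw [h]
  · exact hai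
  · push_cast at hci ⊢
    linarith [mul_nonneg k.cast_nonneg (sub_nonneg.mpr hci)]

lemma le_succ_nsmul_inf_sub {ι : Type*} {a c m : ι → ℤ} {k : ℕ} (ha : (k + 1) • a ≤ m)
    (hc : m ≤ (k + 1) • c) : m ≤ (k + 1) • (c ⊓ (m - k • a)) := by
  intro i
  have hai := ha i
  have hci := hc i
  simp only [Pi.smul_apply, Pi.inf_apply, Pi.sub_apply] at hai hci ⊢
  simp only [nsmul_eq_mul] at hai hci ⊢
  rcases min_choice (c i) (m i - k * a i) with h | h <;> rw [h]
  · exact hci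
  · push_cast at hai ⊢
    linarith [mul_nonneg k.cast_nonneg (sub_nonneg.mpr hai)]

variable {b : Fin n → ℤ} {A B : Fin (n + 1) → ℤ}

theorem exists_mem_prefixBox_sub_mem_of_mem_succ_nsmul (hA : A 0 = 0) (hB : B 0 = 0)
    {δ x : Fin n → ℤ} {P Q : Fin (n + 1) → ℤ} {k : ℕ}
    (hδ : 0 ≤ δ) (hQP : Q ≤ P) (hP : P 0 = 0) (hQ : Q 0 = 0)
    (hδk : ∀ t, δ t ≤ k)
    (hPQk : ∀ i j, i ≤ j → P i + (Fin.partialSum δ j - Fin.partialSum δ i) ≤ Q j + k)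
    (hQPk : ∀ i j, i ≤ j → P j ≤ Q i + k)
    (hx : x ∈ prefixBox 0 ((k + 1) • b - δ) ((k + 1) • A - Q) ((k + 1) • B - P)) :
    ∃ y ∈ prefixBox 0 b A B, x - y ∈ prefixBox 0 (k • b - δ) (k • A - Q) (k • B - P) := by
  obtain ⟨⟨hx0, hxb⟩, hAx, hxB⟩ := hx
  rw [le_sub_iff_add_le] at hxb hxB
  rw [sub_le_iff_le_add] at hAx
  have hx0' : (k + 1) • (0 : Fin n → ℤ) ≤ x := by rwa [smul_zero]
  have hxb' : x ≤ (k + 1) • b := (le_add_of_nonneg_right hδ).trans hxb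
  have hAx' : (k + 1) • A ≤ Fin.partialSum x + P := hAx.trans (by gcongr)
  have hxB' : Fin.partialSum x + Q ≤ (k + 1) • B := le_trans (by gcongr) hxB
  apply exists_mem_prefixBox_sub_mem_prefixBox
  rw [sub_zero]
  refine prefixBox_nonempty_of_approx (x := x) (δ := δ) (P := P) (Q := Q) k.succ_pos
    (by simp [hA, hB, hP]) (by simp [hA, hB, hQ]) ?_ ?_ ?_ ?_ ?_ ?_ ?_
  · convert succ_nsmul_sup_sub_le (hx0'.trans (le_add_of_nonneg_right hδ)) hxb using 3; abel
  · simpa using le_succ_nsmul_inf_sub hx0' hxb'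
  · convert succ_nsmul_sup_sub_le hAx' hxB using 3; abel
  · convert le_succ_nsmul_inf_sub hAx hxB' using 3; abel
  · exact fun t ↦ by have := hδk t; push_cast; linarith
  · exact fun i j hij ↦ by have := hPQk i j hij; push_cast; linarith
  · exact fun i j hij ↦ by have := hQPk i j hij; push_cast; linarith

end Integer

section Socle

variable {n : ℕ} {l h v : Fin n → ℤ} {L U : Fin (n + 1) → ℤ}

lemma partialSum_last_lt_of_forall_not_le (hne : (prefixBox l h L U).Nonempty) (hL : L 0 = 0)
    (hU : U 0 = 0) (hlv : l ≤ v) (hv : ∀ w ∈ prefixBox l h L U, ¬ w ≤ v)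
    (hcover : ∀ t, ∃ w ∈ prefixBox l h L U, w ≤ v + Pi.single t 1) :
    Fin.partialSum v (Fin.last n) < L (Fin.last n) := by
  have hvh : v ≤ h := fun t ↦ by
    obtain ⟨w, hw, hwv⟩ := hcover t
    by_contra! hht
    refine hv w hw fun s ↦ ?_
    rcases eq_or_ne s t with rfl | hst
    · exact (hw.1.2 s).trans hht.le
    · simpa [hst] using hwv s
  by_contra! hlast
  suffices (prefixBox l v L U).Nonempty by
    obtain ⟨w, hw⟩ := this
    exact hv w ⟨⟨hw.1.1, hw.1.2.trans hvh⟩, hw.2⟩ hw.1.2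
  refine prefixBox_nonempty hlv hL hU (fun i j hij ↦ ?_) (fun i j hij ↦ ?_)
  · obtain ⟨w, hw⟩ := hne
    linarith [partialSum_sub_le_partialSum_sub hw.1.1 hij, hw.2.1 i, hw.2.2 j]
  · by_cases hends : i = 0 ∧ j = Fin.last n
    · obtain ⟨rfl, rfl⟩ := hends
      simpa [hU] using hlast
    · obtain ⟨t, ht⟩ := exists_partialSum_single_eq (1 : ℤ) hij hends
      obtain ⟨w, hw, hwv⟩ := hcover t
      have hsteps := partialSum_sub_le_partialSum_sub hwv hij
      simp only [partialSum_add, Pi.add_apply, ht] at hsteps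
      linarith [hw.2.1 j, hw.2.2 i]

theorem add_single_mem_prefixBox_of_forall_not_le (hL : L 0 = 0) (hU : U 0 = 0) (hlv : l ≤ v)
    (hv : ∀ w ∈ prefixBox l h L U, ¬ w ≤ v)
    (hcover : ∀ t, ∃ w ∈ prefixBox l h L U, w ≤ v + Pi.single t 1) (t : Fin n) :
    v + Pi.single t 1 ∈ prefixBox l h L U := by
  obtain ⟨w, hw, hwv⟩ := hcover t
  have hlast := partialSum_last_lt_of_forall_not_le ⟨w, hw⟩ hL hU hlv hv hcover
  suffices w = v + Pi.single t 1 from this ▸ hw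
  refine eq_of_le_of_partialSum_last_le hwv ?_
  rw [partialSum_add, Pi.add_apply, partialSum_single, if_pos (Fin.castSucc_lt_last t)]
  exact (Int.add_one_le_iff.mpr hlast).trans (hw.2.1 _)

end Socle

section PLP

variable {n : ℕ} (b : Fin n → ℤ) (A B : Fin (n + 1) → ℤ)

/-- The exponents of the generators of the `k`-th power of a basic PLP-polymatroidal ideal, as
integer vectors. Here `A` and `B` are `α` and `β` with a `0` prepended as the bound on the empty
sum. -/
def plpPoints (k : ℕ) : Set (Fin n → ℤ) :=
  prefixBox 0 (k • b) (k • A) (k • B)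

/-- The exponents of the monomials, not necessarily outside `I ^ k`, all of whose products with a
variable are generators of `I ^ k`, as integer vectors. -/
def plpSocle (k : ℕ) : Set (Fin n → ℤ) :=
  {x | 0 ≤ x ∧ ∀ t, x + Pi.single t 1 ∈ plpPoints b A B k}

variable {b A B}

lemma add_mem_plpPoints {j k : ℕ} {x y : Fin n → ℤ} (hx : x ∈ plpPoints b A B j)
    (hy : y ∈ plpPoints b A B k) : x + y ∈ plpPoints b A B (j + k) := by
  obtain ⟨⟨hx0, hxb⟩, hAx, hxB⟩ := hx
  obtain ⟨⟨hy0, hyb⟩, hAy, hyB⟩ := hy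
  refine ⟨⟨add_nonneg hx0 hy0, ?_⟩, ?_, ?_⟩ <;> simp only [partialSum_add, add_nsmul]
  exacts [add_le_add hxb hyb, add_le_add hAx hAy, add_le_add hxB hyB]

theorem exists_mem_plpPoints_sub_mem (hA : A 0 = 0) (hB : B 0 = 0) {k : ℕ} {x : Fin n → ℤ}
    (hx : x ∈ plpPoints b A B (k + 1)) :
    ∃ y ∈ plpPoints b A B 1, x - y ∈ plpPoints b A B k := by
  simpa [plpPoints] using exists_mem_prefixBox_sub_mem_of_mem_succ_nsmul (δ := 0) (P := 0)
    (Q := 0) hA hB le_rfl le_rfl rfl rfl (by simp) (by simp [partialSum_zero_left]) (by simp)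
    (by simpa [plpPoints] using hx)

lemma mem_plpSocle_iff [NeZero n] {k : ℕ} {x : Fin n → ℤ} :
    x ∈ plpSocle b A B k ↔ x ∈ prefixBox 0 (k • b - 1)
      (k • A - Fin.partialSum (Pi.single ⊤ 1)) (k • B - Fin.partialSum (Pi.single ⊥ 1)) := by
  constructor
  · rintro ⟨hx0, hx⟩
    refine ⟨⟨hx0, fun t ↦ ?_⟩, ?_, ?_⟩
    · simpa [le_sub_iff_add_le] using (hx t).1.2 t
    · simpa only [partialSum_add, sub_le_iff_le_add] using (hx ⊤).2.1
    · simpa only [partialSum_add, le_sub_iff_add_le] using (hx ⊥).2.2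
  · rintro ⟨⟨hx0, hxb⟩, hAx, hxB⟩
    refine ⟨hx0, fun t ↦ ⟨⟨?_, ?_⟩, ?_⟩⟩
    · exact add_nonneg hx0 (Pi.single_nonneg.mpr zero_le_one)
    · refine (add_le_add_right (fun s ↦ ?_) x).trans (le_sub_iff_add_le.mp hxb)
      rw [Pi.single_apply, Pi.one_apply]
      split_ifs
      exacts [le_rfl, zero_le_one]
    · rw [partialSum_add]
      exact ⟨(sub_le_iff_le_add.mp hAx).trans
        (add_le_add_right (antitone_partialSum_single zero_le_one le_top) _),
        (add_le_add_right (antitone_partialSum_single zero_le_one bot_le) _).trans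
          (le_sub_iff_add_le.mp hxB)⟩

theorem exists_mem_plpPoints_sub_mem_plpSocle [NeZero n] (hA : A 0 = 0) (hB : B 0 = 0) {k : ℕ}
    (hk : 1 ≤ k) (hnk : n ≤ k + 1) {x : Fin n → ℤ} (hx : x ∈ plpSocle b A B (k + 1)) :
    ∃ y ∈ plpPoints b A B 1, x - y ∈ plpSocle b A B k := by
  simp only [mem_plpSocle_iff, plpPoints, one_nsmul] at hx ⊢
  refine exists_mem_prefixBox_sub_mem_of_mem_succ_nsmul hA hB zero_le_one
    (antitone_partialSum_single zero_le_one bot_le) (Fin.partialSum_zero _) (Fin.partialSum_zero _)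
    (fun _ ↦ Nat.one_le_cast.mpr hk) (fun i j hij ↦ ?_) (fun i j _ ↦ ?_) hx
  · simp only [partialSum_single, partialSum_one, Fin.lt_def, Fin.le_def, Fin.val_castSucc] at hij ⊢
    have : ((⊥ : Fin n) : ℕ) = 0 := rfl
    have : ((⊤ : Fin n) : ℕ) = n - 1 := rfl
    split_ifs <;> omega
  · simp only [partialSum_single]
    split_ifs <;> omega

end PLP

section Exponents

open scoped Pointwise

variable {n : ℕ}

/-- Exponent vectors as integer vectors, where partial sums can be subtracted. -/
@[simps]
def intVector : (Fin n →₀ ℕ) →+ (Fin n → ℤ) where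
  toFun u t := u t
  map_zero' := by ext; simp
  map_add' u v := by ext; simp

lemma intVector_injective : Function.Injective (intVector (n := n)) := fun _ _ huv ↦
  Finsupp.ext fun t ↦ Nat.cast_injective (congrFun huv t)

lemma intVector_le_intVector {u v : Fin n →₀ ℕ} : intVector u ≤ intVector v ↔ u ≤ v :=
  forall_congr' fun _ ↦ Nat.cast_le

lemma intVector_single (t : Fin n) (a : ℕ) :
    intVector (Finsupp.single t a) = Pi.single t (a : ℤ) := by
  ext s
  simp [Finsupp.single_apply, Pi.single_apply, eq_comm]

lemma intVector_nonneg (u : Fin n →₀ ℕ) : 0 ≤ intVector u := fun t ↦ (u t).cast_nonneg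

lemma exists_intVector_eq {x : Fin n → ℤ} (hx : 0 ≤ x) : ∃ u, intVector u = x := by
  lift x to Fin n → ℕ using hx
  exact ⟨Finsupp.equivFunOnFinite.symm x, rfl⟩

variable (b α β : Fin n → ℕ)

/-- The exponents of the generators of the `k`-th power of the basic PLP-polymatroidal ideal of type
`(0, b | α, β)`. -/
def plpExponents (k : ℕ) : Set (Fin n →₀ ℕ) :=
  intVector ⁻¹'
    plpPoints (fun t ↦ b t) (Fin.cons 0 fun t ↦ α t) (Fin.cons 0 fun t ↦ β t) k

variable {b α β}

lemma zero_mem_plpExponents_zero : 0 ∈ plpExponents b α β 0 := by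
  simp [plpExponents, plpPoints, prefixBox, partialSum_zero_left]

lemma plpExponents_succ (k : ℕ) :
    plpExponents b α β (k + 1) = plpExponents b α β k + plpExponents b α β 1 := by
  refine subset_antisymm (fun v hv ↦ ?_) (Set.add_subset_iff.mpr fun u hu w hw ↦ ?_)
  · obtain ⟨y, hy, hvy⟩ := exists_mem_plpPoints_sub_mem rfl rfl hv
    obtain ⟨u, rfl⟩ := exists_intVector_eq hy.1.1
    obtain ⟨w, hw⟩ := exists_intVector_eq hvy.1.1
    rw [← hw] at hvy
    refine ⟨w, hvy, u, hy, intVector_injective ?_⟩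
    rw [map_add, hw, sub_add_cancel]
  · rw [plpExponents, Set.mem_preimage, map_add]
    exact add_mem_plpPoints hu hw

theorem exists_mem_plpExponents_le_or_add_eq [NeZero n] {k : ℕ} (hk : 1 ≤ k) (hnk : n ≤ k + 1)
    {v : Fin n →₀ ℕ}
    (hv : ∀ t, ∃ w ∈ plpExponents b α β (k + 1), w ≤ v + Finsupp.single t 1) :
    (∃ w ∈ plpExponents b α β (k + 1), w ≤ v) ∨
      ∃ u ∈ plpExponents b α β 1, ∃ w, (∀ t, w + Finsupp.single t 1 ∈ plpExponents b α β k) ∧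
        u + w = v := by
  refine or_iff_not_imp_left.mpr fun hnot ↦ ?_
  have hsocle : intVector v ∈ plpSocle (fun t ↦ b t) (Fin.cons 0 fun t ↦ α t)
      (Fin.cons 0 fun t ↦ β t) (k + 1) := by
    refine ⟨intVector_nonneg v, add_single_mem_prefixBox_of_forall_not_le (by simp) (by simp)
      (intVector_nonneg v) (fun x hx hxv ↦ ?_) fun t ↦ ?_⟩
    · obtain ⟨w, rfl⟩ := exists_intVector_eq hx.1.1
      exact hnot ⟨w, hx, intVector_le_intVector.mp hxv⟩
    · obtain ⟨w, hw, hwv⟩ := hv t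
      refine ⟨intVector w, hw, ?_⟩
      rw [← Nat.cast_one, ← intVector_single, ← map_add]
      exact intVector_le_intVector.mpr hwv
  obtain ⟨y, hy, hvy⟩ := exists_mem_plpPoints_sub_mem_plpSocle rfl rfl hk hnk hsocle
  obtain ⟨u, rfl⟩ := exists_intVector_eq hy.1.1
  obtain ⟨w, hw⟩ := exists_intVector_eq hvy.1
  refine ⟨u, hy, w, fun t ↦ ?_, intVector_injective ?_⟩
  · rw [plpExponents, Set.mem_preimage, map_add, intVector_single, hw, Nat.cast_one]
    exact hvy.2 t
  · rw [map_add, hw, add_sub_cancel]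

end Exponents

section Ideal

open scoped Pointwise

lemma mul_colon_le_colon_mul {R : Type*} [CommSemiring R] (I J : Ideal R) (s : Set R) :
    I * J.colon s ≤ (I * J).colon s :=
  Ideal.mul_le.mpr fun a ha f hf ↦ Submodule.mem_colon.mpr fun g hg ↦ by
    rw [smul_eq_mul, mul_assoc]
    exact Ideal.mul_mem_mul ha (Submodule.mem_colon.mp hf g hg)

variable {σ : Type*} (R : Type*) [CommSemiring R]

/-- The monomial ideal generated by the monomials with exponent in `s`. -/
noncomputable def monomialIdeal (s : Set (σ →₀ ℕ)) : Ideal (MvPolynomial σ R) :=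
  Ideal.span ((fun u ↦ monomial u 1) '' s)

variable {R} {s : Set (σ →₀ ℕ)}

lemma mem_monomialIdeal {f : MvPolynomial σ R} :
    f ∈ monomialIdeal R s ↔ ∀ v ∈ f.support, ∃ w ∈ s, w ≤ v :=
  mem_ideal_span_monomial_image

lemma monomial_mem_monomialIdeal {w v : σ →₀ ℕ} (hw : w ∈ s) (hwv : w ≤ v) (c : R) :
    monomial v c ∈ monomialIdeal R s :=
  mem_monomialIdeal.mpr fun _ hv' ↦
    ⟨w, hw, (Finset.mem_singleton.mp (support_monomial_subset hv')).symm ▸ hwv⟩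

lemma monomialIdeal_add (s t : Set (σ →₀ ℕ)) :
    monomialIdeal R (s + t) = monomialIdeal R s * monomialIdeal R t := by
  rw [monomialIdeal, monomialIdeal, monomialIdeal, Ideal.span_mul_span']
  congr 1
  rw [← Set.image2_add, ← Set.image2_mul, Set.image_image2, Set.image2_image_left,
    Set.image2_image_right]
  simp only [monomial_mul, one_mul]

lemma mem_colon_monomialIdeal {f : MvPolynomial σ R} :
    f ∈ (monomialIdeal R s).colon (idealOfVars σ R) ↔
      ∀ v ∈ f.support, ∀ i, ∃ w ∈ s, w ≤ v + Finsupp.single i 1 := by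
  rw [Submodule.colon_span]
  simp only [Submodule.mem_colon, Set.forall_mem_range, smul_eq_mul, mem_monomialIdeal,
    support_mul_X, Finset.forall_mem_map]
  exact forall_comm.trans (forall_congr' fun _ ↦ forall_comm)

end Ideal

section PLPIdeal

variable (R : Type*) [CommSemiring R] {n : ℕ} (b α β : Fin n → ℕ)

/-- The basic PLP-polymatroidal ideal of type `(0, b | α, β)`, for arbitrary bounds `b`, `α`, `β`
and with coefficients in a commutative semiring. -/
noncomputable def plpIdeal : Ideal (MvPolynomial (Fin n) R) :=
  Ideal.span {f | ∃ u : Fin n → ℕ, (∀ i, u i ≤ b i) ∧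
    (∀ i, α i ≤ ∑ j ∈ Finset.Iic i, u j ∧ ∑ j ∈ Finset.Iic i, u j ≤ β i) ∧
    f = ∏ i, X i ^ u i}

variable {b α β}

lemma mem_plpExponents_one {u : Fin n →₀ ℕ} :
    u ∈ plpExponents b α β 1 ↔ (∀ i, u i ≤ b i) ∧
      ∀ i, α i ≤ ∑ j ∈ Finset.Iic i, u j ∧ ∑ j ∈ Finset.Iic i, u j ≤ β i := by
  simp only [plpExponents, plpPoints, prefixBox, Set.mem_preimage,
    Set.mem_ofPred_eq, Set.mem_Icc, true_and, one_nsmul, Pi.le_def,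
    Fin.forall_fin_succ, Fin.cons_zero, Fin.cons_succ, Fin.partialSum_zero, le_rfl,
    partialSum_succ_eq_sum_Iic, intVector_apply, forall_and,
    Pi.zero_apply, Nat.cast_nonneg, implies_true]
  norm_cast

variable {R}

lemma plpIdeal_eq_monomialIdeal :
    plpIdeal R b α β = monomialIdeal R (plpExponents b α β 1) := by
  have hmonomial (u : Fin n →₀ ℕ) : monomial u (1 : R) = ∏ i, X i ^ u i := by
    rw [monomial_eq, map_one, one_mul, Finsupp.prod_fintype _ _ fun _ ↦ pow_zero _]
  rw [plpIdeal, monomialIdeal]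
  congr 1
  ext f
  simp only [Set.mem_image, mem_plpExponents_one, hmonomial]
  constructor
  · rintro ⟨u, hub, hu, rfl⟩
    exact ⟨Finsupp.equivFunOnFinite.symm u, ⟨hub, hu⟩, rfl⟩
  · rintro ⟨u, ⟨hub, hu⟩, rfl⟩
    exact ⟨u, hub, hu, rfl⟩

lemma plpIdeal_pow (k : ℕ) :
    plpIdeal R b α β ^ k = monomialIdeal R (plpExponents b α β k) := by
  induction k with
  | zero =>
    rw [pow_zero, Ideal.one_eq_top, eq_comm, Ideal.eq_top_iff_one]
    exact monomial_mem_monomialIdeal zero_mem_plpExponents_zero le_rfl 1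
  | succ k ih =>
    rw [pow_succ, ih, plpIdeal_eq_monomialIdeal, ← monomialIdeal_add]
    exact congrArg _ (plpExponents_succ k).symm

lemma colon_plpIdeal_pow_succ_le [NeZero n] {k : ℕ} (hk : 1 ≤ k) (hnk : n ≤ k + 1) :
    (plpIdeal R b α β ^ (k + 1)).colon (idealOfVars (Fin n) R) ≤ plpIdeal R b α β ^ (k + 1) ⊔
      plpIdeal R b α β * (plpIdeal R b α β ^ k).colon (idealOfVars (Fin n) R) := by
  intro f hf
  simp only [plpIdeal_pow, mem_colon_monomialIdeal] at hf
  rw [f.as_sum]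
  refine Ideal.sum_mem _ fun v hv ↦ ?_
  rcases exists_mem_plpExponents_le_or_add_eq hk hnk (hf v hv) with
    ⟨w, hw, hwv⟩ | ⟨u, hu, w, hw, rfl⟩
  · refine Ideal.mem_sup_left ?_
    rw [plpIdeal_pow]
    exact monomial_mem_monomialIdeal hw hwv _
  · refine Ideal.mem_sup_right ?_
    rw [← one_mul (coeff _ f), ← monomial_mul]
    refine Ideal.mul_mem_mul ?_ ?_
    · rw [plpIdeal_eq_monomialIdeal]
      exact monomial_mem_monomialIdeal hu le_rfl 1
    · rw [plpIdeal_pow, mem_colon_monomialIdeal]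
      intro v hv t
      obtain rfl := Finset.mem_singleton.mp (support_monomial_subset hv)
      exact ⟨_, hw t, le_rfl⟩

end PLPIdeal

theorem socle_of_PLP_generated_in_small_degrees_general {R : Type*} [CommSemiring R] {n : ℕ}
    [NeZero n] (b α β : Fin n → ℕ) {k : ℕ} (hk : 1 ≤ k) (hnk : n ≤ k + 1) :
    (plpIdeal R b α β ^ (k + 1)).colon (idealOfVars (Fin n) R) = plpIdeal R b α β ^ (k + 1) ⊔
      plpIdeal R b α β * (plpIdeal R b α β ^ k).colon (idealOfVars (Fin n) R) := by
  refine le_antisymm (colon_plpIdeal_pow_succ_le hk hnk) (sup_le Ideal.le_colon ?_)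
  rw [pow_succ']
  exact mul_colon_le_colon_mul _ _ _

/-- For a basic PLP-polymatroidal ideal `I` of type `(0, b | α, β)` in
`S = K[x₁,…,xₙ]`, one has `(I^{k+1} : 𝔪) = I^{k+1} + I·(I^k : 𝔪)` for every `k ≥ n - 1`;
that is, `Soc*(I)` (and hence `Soc(I)`) is generated in degrees `< n`. -/
theorem socle_of_PLP_generated_in_small_degrees
    {K : Type*} [Field K] {n : ℕ} (hn : 0 < n) (d : ℕ) (hd : 1 ≤ d)
    (b α β : Fin n → ℕ)
    (hαmono : Monotone α) (hβmono : Monotone β)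
    (hαlast : α ⟨n - 1, by omega⟩ = d) (hβlast : β ⟨n - 1, by omega⟩ = d)
    (hαβ : ∀ i, α i ≤ β i)
    (hα1 : α ⟨0, hn⟩ = 0) (hβ1 : β ⟨0, hn⟩ = b ⟨0, hn⟩)
    (I : Ideal (MvPolynomial (Fin n) K))
    (hI : I = Ideal.span {f | ∃ u : Fin n → ℕ, (∀ i, u i ≤ b i) ∧
        (∀ i, α i ≤ ∑ j ∈ Finset.Iic i, u j ∧ ∑ j ∈ Finset.Iic i, u j ≤ β i) ∧
        f = ∏ i, X i ^ u i})
    (mI : Ideal (MvPolynomial (Fin n) K)) (hmI : mI = Ideal.span (Set.range X)) :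
    ∀ k : ℕ, n - 1 ≤ k →
      (I ^ (k + 1)).colon mI = I ^ (k + 1) ⊔ I * ((I ^ k).colon mI) := by
  intro k hk
  subst hI hmI
  have : NeZero n := .of_pos hn
  have hn1 : n ≠ 1 := by
    rintro rfl
    exact Nat.one_le_iff_ne_zero.mp hd (hαlast.symm.trans hα1)
  exact socle_of_PLP_generated_in_small_degrees_general b α β (by omega) (by omega)
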